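/- Let G_{n,d} be the configuration-model random d-regular multigraph on n vertices and let Z_{i,j} be the number of vertex subsets S with |S| = i such that the induced subgraph G_{n,d}[S] has exactly j edges. Then for all 1 ≤ i ≤ n and 0 ≤ j ≤ (d/2)·i (with corresponding factorial arguments nonnegative integers), E[Z_{i,j}] = C(n, i) · (i d)! · ((n − i) d)! · (nd/2)! · 2^{i d − 2j} / [ (i d − 2j)! · j! · (nd/2 − i d + j)! · (nd)! ]. -/

import Mathlib

/-!
The configuration model; exact formula for `E[Z_{i,j}]`, the expected number of vertex
subsets of size `i` inducing exactly `j` edges.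
-/

open scoped Classical

noncomputable section

/-- The set of pairings (perfect matchings of the `n*d` half-edges) in the configuration
model for a `d`-regular multigraph on `n` vertices. -/
def pairings (n d : ℕ) : Finset ((Fin n × Fin d) ≃ (Fin n × Fin d)) :=
  Finset.univ.filter fun M => (∀ x, M (M x) = x) ∧ ∀ x, M x ≠ x

/-- The number of edges (loops and parallel edges counted) of the sub-multigraph induced on
`S` by the configuration-model multigraph of the pairing `M`. -/
def edgesWithin {n d : ℕ} (M : (Fin n × Fin d) ≃ (Fin n × Fin d)) (S : Finset (Fin n)) : ℕ :=
  (Finset.univ.filter fun h : Fin n × Fin d => h.1 ∈ S ∧ (M h).1 ∈ S).card / 2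

/-- `Z_{i,j}`: the number of vertex subsets `S` with `|S| = i` inducing exactly `j` edges. -/
def Zcount (n d i j : ℕ) (M : (Fin n × Fin d) ≃ (Fin n × Fin d)) : ℕ :=
  (Finset.univ.filter fun S : Finset (Fin n) => S.card = i ∧ edgesWithin M S = j).card

/-- The expectation of `Z_{i,j}` under the uniform distribution on pairings. -/
def EZ (n d i j : ℕ) : ℝ :=
  (∑ M ∈ pairings n d, (Zcount n d i j M : ℝ)) / ((pairings n d).card : ℝ)

/-- Number of elements of `T` mapped into `T`. -/
def Wc {α : Type} [Fintype α] (M : Equiv.Perm α) (T : Finset α) : ℕ :=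
  (Finset.univ.filter fun h : α => h ∈ T ∧ M h ∈ T).card

/-- Fixed-point free involutions. -/
def fpf {α : Type} [Fintype α] : Finset (Equiv.Perm α) :=
  Finset.univ.filter fun M => (∀ x, M (M x) = x) ∧ ∀ x, M x ≠ x

lemma Wc_conj {α β : Type} [Fintype α] [Fintype β] (g : α ≃ β) (M : Equiv.Perm α)
    (T : Finset α) : Wc (g.permCongr M) (T.map g.toEmbedding) = Wc M T := by
  unfold Wc
  symm
  apply Finset.card_bij (fun a _ => g a)
  · intro a ha
    simpa using ha
  · intro a _ b _ h
    exact g.injective h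
  · intro b hb
    refine ⟨g.symm b, ?_, by simp⟩
    simp only [Finset.mem_filter, Finset.mem_univ, true_and, Finset.mem_map_equiv,
      Equiv.permCongr_apply, Equiv.symm_apply_apply] at hb ⊢
    exact hb

lemma fpf_conj {α β : Type} [Fintype α] [Fintype β] (g : α ≃ β) (M : Equiv.Perm α)
    (hM : M ∈ fpf (α := α)) : g.permCongr M ∈ fpf (α := β) := by
  simp only [fpf, Finset.mem_filter, Finset.mem_univ, true_and, Equiv.permCongr_apply,
    Equiv.symm_apply_apply] at hM ⊢
  refine ⟨fun x => by rw [hM.1]; simp, fun x h => hM.2 (g.symm x) ?_⟩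
  exact (Equiv.eq_symm_apply g).2 h

/-- The number of subsets does not change under relabelling. -/
lemma countT_conj {α β : Type} [Fintype α] [Fintype β] (g : α ≃ β) (M : Equiv.Perm α)
    (a j : ℕ) :
    (Finset.univ.filter fun T : Finset β => T.card = a ∧ Wc (g.permCongr M) T / 2 = j).card =
    (Finset.univ.filter fun T : Finset α => T.card = a ∧ Wc M T / 2 = j).card := by
  symm
  apply Finset.card_bij (fun T _ => T.map g.toEmbedding)
  · intro T hT
    simpa [Wc_conj] using hT
  · intro T _ T' _ h
    exact Finset.map_injective _ h
  · intro T hT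
    have e : (T.map g.symm.toEmbedding).map g.toEmbedding = T := by
      ext x; simp
    refine ⟨T.map g.symm.toEmbedding, ?_, e⟩
    rw [← e] at hT
    simpa only [Finset.mem_filter, Finset.mem_univ, true_and, Wc_conj, Finset.card_map] using hT

/-- The number of pairings depends only on the size of `T`. -/
lemma countM_conj {α : Type} [Fintype α] (j : ℕ) (T T' : Finset α) (h : T.card = T'.card) :
    ((fpf (α := α)).filter fun M => Wc M T / 2 = j).card =
    ((fpf (α := α)).filter fun M => Wc M T' / 2 = j).card := by
  obtain ⟨g, hg⟩ : ∃ g : Equiv.Perm α, T.map g.toEmbedding = T' := by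
    have e : {x // x ∈ T} ≃ {x // x ∈ T'} := Finset.equivOfCardEq h
    refine ⟨e.extendSubtype, ?_⟩
    apply Finset.eq_of_subset_of_card_le
    · intro x hx
      obtain ⟨y, hy, rfl⟩ := Finset.mem_map.1 hx
      exact e.extendSubtype_mem y hy
    · simp [h]
  apply Finset.card_bij (fun M _ => g.permCongr M)
  · intro M hM
    rw [Finset.mem_filter] at hM ⊢
    exact ⟨fpf_conj g M hM.1, by rw [← hg, Wc_conj]; exact hM.2⟩
  · intro M _ M' _ h
    exact g.permCongr.injective h
  · intro M hM
    have e : g.permCongr (g.symm.permCongr M) = M := by ext x; simp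
    refine ⟨g.symm.permCongr M, ?_, e⟩
    rw [Finset.mem_filter] at hM ⊢
    refine ⟨fpf_conj _ M hM.1, ?_⟩
    rw [← hM.2, ← hg]
    conv_rhs => rw [← e]
    rw [Wc_conj]

/-- The standard pairing. -/
def stdM (m : ℕ) : Equiv.Perm (Fin m × Bool) :=
  Equiv.prodCongr (Equiv.refl _) Equiv.boolNot

lemma stdM_fpf (m : ℕ) : stdM m ∈ fpf (α := Fin m × Bool) := by
  simp [fpf, stdM]

lemma fpf_cycleType {α : Type} [Fintype α] (M : Equiv.Perm α) (hM : M ∈ fpf (α := α)) :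
    M.cycleType = Multiset.replicate (Fintype.card α / 2) 2 := by
  simp only [fpf, Finset.mem_filter, Finset.mem_univ, true_and] at hM
  have h1 : ∀ k ∈ M.cycleType, k = 2 := by
    intro k hk
    have h2 := Equiv.Perm.two_le_of_mem_cycleType hk
    have h3 := Equiv.Perm.dvd_of_mem_cycleType hk
    have h4 : orderOf M ∣ 2 := orderOf_dvd_of_pow_eq_one (by
      ext x; simp [pow_two, hM.1])
    have := Nat.le_of_dvd (by norm_num) (h3.trans h4)
    omega
  have h5 := Multiset.eq_replicate_card.2 h1
  have h6 := Equiv.Perm.sum_cycleType M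
  have h7 : M.support = Finset.univ := by
    ext x; simp [hM.2 x]
  rw [h7, Finset.card_univ, h5] at h6
  simp at h6
  rw [h5]
  congr 1
  omega

lemma exists_conj {α : Type} [Fintype α] (m : ℕ) (hm : Fintype.card α = 2 * m)
    (M : Equiv.Perm α) (hM : M ∈ fpf (α := α)) :
    ∃ g : Fin m × Bool ≃ α, M = g.permCongr (stdM m) := by
  have e : Fin m × Bool ≃ α := Fintype.equivOfCardEq (by simp [hm, mul_comm])
  have h := fpf_conj e _ (stdM_fpf m)
  have hc : IsConj (e.permCongr (stdM m)) M := by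
    rw [Equiv.Perm.isConj_iff_cycleType_eq, fpf_cycleType _ h, fpf_cycleType _ hM]
  obtain ⟨c, hc⟩ := isConj_iff.1 hc
  refine ⟨e.trans c, ?_⟩
  rw [← hc]
  ext x
  simp [Equiv.Perm.inv_def]

lemma count_fun (m j k : ℕ) :
    (Finset.univ.filter fun f : Fin m → Finset Bool =>
      (Finset.univ.filter fun x => (f x).card = 2).card = j ∧
      (Finset.univ.filter fun x => (f x).card = 1).card = k).card =
    m.choose j * (m - j).choose k * 2 ^ k := by
  set D : Finset (Σ _ : Finset (Fin m), Finset (Fin m)) :=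
    (Finset.powersetCard j (Finset.univ : Finset (Fin m))).sigma
      (fun P => Finset.powersetCard k (Finset.univ \ P)) with hD
  have hDc : D.card = m.choose j * (m - j).choose k := by
    rw [hD, Finset.card_sigma, Finset.sum_congr rfl (g := fun _ => (m - j).choose k)]
    · simp
    · intro P hP
      rw [Finset.mem_powersetCard] at hP
      rw [Finset.card_powersetCard, Finset.card_sdiff_of_subset hP.1, hP.2]
      simp
  rw [Finset.card_eq_sum_card_fiberwise (t := D) (f := fun f =>
    ⟨Finset.univ.filter fun x => (f x).card = 2, Finset.univ.filter fun x => (f x).card = 1⟩)]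
  · rw [← hDc, Finset.sum_const_nat]
    rintro ⟨P, Q⟩ hPQ
    simp only [hD, Finset.mem_sigma, Finset.mem_powersetCard] at hPQ
    obtain ⟨⟨-, hP⟩, hQ, hk⟩ := hPQ
    have hdis : ∀ x ∈ Q, x ∉ P := fun x hx => by simpa using hQ hx
    have : (Finset.filter (fun f : Fin m → Finset Bool =>
        (⟨Finset.univ.filter fun x => (f x).card = 2, Finset.univ.filter fun x => (f x).card = 1⟩ :
          Σ _ : Finset (Fin m), Finset (Fin m)) = ⟨P, Q⟩)
        (Finset.univ.filter fun f : Fin m → Finset Bool =>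
          (Finset.univ.filter fun x => (f x).card = 2).card = j ∧
          (Finset.univ.filter fun x => (f x).card = 1).card = k)) =
        Fintype.piFinset (fun x => Finset.powersetCard
          (if x ∈ P then 2 else if x ∈ Q then 1 else 0) (Finset.univ : Finset Bool)) := by
      ext f
      simp only [Finset.mem_filter, Finset.mem_univ, true_and, Fintype.mem_piFinset,
        Finset.mem_powersetCard, Finset.subset_univ, Sigma.mk.injEq, heq_eq_eq]
      constructor
      · rintro ⟨-, rfl, rfl⟩ x
        have : (f x).card ≤ 2 := by simpa using Finset.card_le_univ (f x)
        simp only [Finset.mem_filter, Finset.mem_univ, true_and]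
        split_ifs <;> omega
      · intro h
        have e1 : (Finset.univ.filter fun x => (f x).card = 2) = P := by
          ext x
          have := h x
          simp only [Finset.mem_filter, Finset.mem_univ, true_and]
          split_ifs at this <;> simp_all
        have e2 : (Finset.univ.filter fun x => (f x).card = 1) = Q := by
          ext x
          have := h x
          have hd := hdis x
          simp only [Finset.mem_filter, Finset.mem_univ, true_and]
          by_cases hxQ : x ∈ Q
          · have hp := hd hxQ
            simp only [hp, hxQ, if_true, if_false] at this
            simp [this, hxQ]
          · simp only [hxQ, if_false] at this
            split_ifs at this <;> simp [this, hxQ]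
        rw [e1, e2]
        exact ⟨⟨hP, hk⟩, rfl, rfl⟩
    rw [this, Fintype.card_piFinset]
    have : ∀ x, (Finset.powersetCard
          (if x ∈ P then 2 else if x ∈ Q then 1 else 0) (Finset.univ : Finset Bool)).card =
          if x ∈ Q then 2 else 1 := by
      intro x
      have := hdis x
      rw [Finset.card_powersetCard]
      split_ifs <;> simp_all
    simp only [this]
    rw [Finset.prod_ite]
    simp [hk]
  · intro f hf
    simp only [Finset.coe_filter, Finset.mem_univ, true_and, Set.mem_ofPred_eq] at hf
    simp only [hD, Finset.mem_coe, Finset.mem_sigma, Finset.mem_powersetCard,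
      Finset.subset_univ, true_and]
    refine ⟨hf.1, ?_, hf.2⟩
    intro x hx
    simp at hx ⊢
    omega

lemma count_std (m a j : ℕ) (h : 2 * j ≤ a) :
    (Finset.univ.filter fun T : Finset (Fin m × Bool) =>
      T.card = a ∧ Wc (stdM m) T / 2 = j).card =
    m.choose j * (m - j).choose (a - 2 * j) * 2 ^ (a - 2 * j) := by
  rw [← count_fun]
  have key : ∀ f : Fin m → Finset Bool,
      (Finset.univ.filter fun p : Fin m × Bool => p.2 ∈ f p.1).card =
        2 * (Finset.univ.filter fun x => (f x).card = 2).card +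
        (Finset.univ.filter fun x => (f x).card = 1).card ∧
      Wc (stdM m) (Finset.univ.filter fun p : Fin m × Bool => p.2 ∈ f p.1) =
        2 * (Finset.univ.filter fun x => (f x).card = 2).card := by
    intro f
    unfold Wc
    simp only [Finset.card_filter, Finset.mul_sum, ← Finset.sum_add_distrib,
      Fintype.sum_prod_type]
    constructor
    · refine Finset.sum_congr rfl fun x _ => ?_
      have : ∀ s : Finset Bool, s = ∅ ∨ s = {true} ∨ s = {false} ∨ s = {true, false} := by decide
      rcases this (f x) with h | h | h | h <;> simp [h]
    · refine Finset.sum_congr rfl fun x _ => ?_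
      simp only [stdM, Finset.mem_filter, Finset.mem_univ, true_and, Equiv.prodCongr_apply,
        Prod.map, Equiv.refl_apply, Equiv.boolNot_apply]
      generalize f x = s
      simp only [Fintype.sum_bool, Bool.not_true, Bool.not_false]
      have : ∀ s : Finset Bool, s = ∅ ∨ s = {true} ∨ s = {false} ∨ s = {true, false} := by decide
      rcases this s with rfl | rfl | rfl | rfl <;> simp
  symm
  apply Finset.card_bij (fun f _ => Finset.univ.filter fun p : Fin m × Bool => p.2 ∈ f p.1)
  · intro f hf
    simp only [Finset.mem_filter, Finset.mem_univ, true_and] at hf ⊢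
    rw [(key f).1, (key f).2]
    omega
  · intro f _ f' _ h
    ext x b
    have := congrArg (fun s => (x, b) ∈ s) h
    simpa using this
  · intro T hT
    have e : (Finset.univ.filter fun p : Fin m × Bool =>
        p.2 ∈ (Finset.univ.filter fun b => (p.1, b) ∈ T)) = T := by
      ext p; simp
    have k := key (fun x => Finset.univ.filter fun b => (x, b) ∈ T)
    refine ⟨fun x => Finset.univ.filter fun b => (x, b) ∈ T, ?_, e⟩
    simp only [e] at k
    simp only [Finset.mem_filter, Finset.mem_univ, true_and] at hT ⊢
    omega

lemma double_count {α : Type} [Fintype α] (m a j : ℕ) (hm : Fintype.card α = 2 * m)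
    (h : 2 * j ≤ a) (T : Finset α) (hT : T.card = a) :
    (2 * m).choose a * ((fpf (α := α)).filter fun M => Wc M T / 2 = j).card =
    (fpf (α := α)).card * (m.choose j * (m - j).choose (a - 2 * j) * 2 ^ (a - 2 * j)) := by
  have h1 := Finset.sum_card_bipartiteAbove_eq_sum_card_bipartiteBelow
    (s := Finset.powersetCard a (Finset.univ : Finset α)) (t := fpf (α := α))
    (fun T M => Wc M T / 2 = j)
  rw [Finset.sum_const_nat (m := ((fpf (α := α)).filter fun M => Wc M T / 2 = j).card),
    Finset.sum_const_nat
      (m := m.choose j * (m - j).choose (a - 2 * j) * 2 ^ (a - 2 * j))] at h1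
  · rw [← h1]; simp [hm]
  · intro M hM
    obtain ⟨g, rfl⟩ := exists_conj m hm M hM
    rw [← count_std m a j h, ← countT_conj g]
    congr 1
    ext T
    simp [Finset.bipartiteBelow, Finset.mem_powersetCard]
  · intro T' hT'
    rw [Finset.mem_powersetCard] at hT'
    exact countM_conj j T' T (hT'.2.trans hT.symm)

lemma sum_Z (n d i j m : ℕ) (hm : n * d = 2 * m) (hj1 : 2 * j ≤ i * d) :
    (2 * m).choose (i * d) * ∑ M ∈ pairings n d, Zcount n d i j M =
    n.choose i * ((pairings n d).card *
      (m.choose j * (m - j).choose (i * d - 2 * j) * 2 ^ (i * d - 2 * j))) := by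
  have h1 := Finset.sum_card_bipartiteAbove_eq_sum_card_bipartiteBelow
    (s := Finset.powersetCard i (Finset.univ : Finset (Fin n))) (t := pairings n d)
    (fun S M => edgesWithin M S = j)
  have h2 : ∑ M ∈ pairings n d, Zcount n d i j M = ∑ M ∈ pairings n d,
      ((Finset.powersetCard i (Finset.univ : Finset (Fin n))).bipartiteBelow
        (fun S M => edgesWithin M S = j) M).card := by
    refine Finset.sum_congr rfl fun M _ => ?_
    unfold Zcount
    congr 1
    ext S
    simp [Finset.bipartiteBelow, Finset.mem_powersetCard]
  rw [h2, ← h1, Finset.mul_sum, Finset.sum_const_nat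
    (m := (pairings n d).card *
      (m.choose j * (m - j).choose (i * d - 2 * j) * 2 ^ (i * d - 2 * j)))]
  · simp
  · intro S hS
    rw [Finset.mem_powersetCard] at hS
    have := double_count (α := Fin n × Fin d) m (i * d) j (by simp [hm]) hj1
      (S ×ˢ Finset.univ) (by simp [hS.2])
    have e : pairings n d = fpf (α := Fin n × Fin d) := by
      ext M; simp [pairings, fpf]
    rw [e, ← this]
    congr 2
    ext M
    unfold Finset.bipartiteAbove
    rw [Finset.mem_filter, Finset.mem_filter]
    simp [edgesWithin, Wc]

lemma pairings_nonempty (n d m : ℕ) (hm : n * d = 2 * m) : (pairings n d).Nonempty := by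
  have e : Fin m × Bool ≃ Fin n × Fin d := Fintype.equivOfCardEq (by simp [hm, mul_comm])
  have := fpf_conj e _ (stdM_fpf m)
  refine ⟨e.permCongr (stdM m), ?_⟩
  unfold pairings
  unfold fpf at this
  simpa using this

/-- Lemma: exact formula for `E[Z_{i,j}]` in the configuration model, for `1 ≤ i ≤ n` and
`0 ≤ j ≤ (d/2) i` (so that all factorial arguments are nonnegative integers). -/
theorem EZ_formula (n d i j : ℕ) (heven : Even (n * d))
    (hi1 : 1 ≤ i) (hi2 : i ≤ n) (hj1 : 2 * j ≤ i * d) (hj2 : i * d ≤ n * d / 2 + j) :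
    EZ n d i j =
      (n.choose i : ℝ) *
        ((((i * d).factorial : ℝ) * (((n - i) * d).factorial : ℝ) *
            ((n * d / 2).factorial : ℝ) * (2 : ℝ) ^ (i * d - 2 * j)) /
          (((i * d - 2 * j).factorial : ℝ) * (j.factorial : ℝ) *
            ((n * d / 2 + j - i * d).factorial : ℝ) * ((n * d).factorial : ℝ))) := by
  obtain ⟨m, hm⟩ := heven.two_dvd
  have hne : ((pairings n d).card : ℝ) ≠ 0 := by
    exact_mod_cast (Finset.card_pos.2 (pairings_nonempty n d m hm)).ne'
  have hs := sum_Z n d i j m hm hj1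
  have ha : i * d ≤ n * d := Nat.mul_le_mul_right d hi2
  have hb : (n - i) * d = 2 * m - i * d := by rw [Nat.sub_mul, hm]
  have hm2 : n * d / 2 = m := by omega
  rw [hm2] at hj2
  rw [hb, hm2, hm]
  rw [hm] at ha
  unfold EZ
  generalize i * d = a at *
  have c1 := Nat.choose_mul_factorial_mul_factorial ha
  have c2 := Nat.choose_mul_factorial_mul_factorial (show j ≤ m by omega)
  have c3 := Nat.choose_mul_factorial_mul_factorial (show a - 2 * j ≤ m - j by omega)
  rw [show m - j - (a - 2 * j) = m + j - a by omega] at c3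
  have p1 : (0 : ℝ) < (2 * m).choose a := by exact_mod_cast Nat.choose_pos ha
  have hs' : ((2 * m).choose a : ℝ) * ∑ M ∈ pairings n d, (Zcount n d i j M : ℝ) =
    n.choose i * ((pairings n d).card *
      (m.choose j * (m - j).choose (a - 2 * j) * 2 ^ (a - 2 * j))) := by
    exact_mod_cast hs
  have c1' : ((2 * m).choose a : ℝ) * a.factorial * (2 * m - a).factorial = (2 * m).factorial := by
    exact_mod_cast c1
  have c23 : (m.choose j : ℝ) * (m - j).choose (a - 2 * j) *
      ((a - 2 * j).factorial * j.factorial * (m + j - a).factorial) = m.factorial := by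
    rw [← c2, ← c3]; push_cast; ring
  rw [← c23, ← c1', div_eq_iff hne]
  apply mul_left_cancel₀ p1.ne'
  rw [hs']
  have f1 : (a.factorial : ℝ) ≠ 0 := by positivity
  have f2 : ((2 * m - a).factorial : ℝ) ≠ 0 := by positivity
  have f3 : ((a - 2 * j).factorial : ℝ) ≠ 0 := by positivity
  have f4 : (j.factorial : ℝ) ≠ 0 := by positivity
  have f5 : ((m + j - a).factorial : ℝ) ≠ 0 := by positivity
  have := p1.ne'
  field_simp

end
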